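/- Let G be a basic CUH graph that omits D and in which at least one color class does not form an independent set, and let M_R be a maximal red clique and M_B a maximal blue clique. If ω_R > 1, there is a partition M_R = R1 ∪ R2 into two non-empty parts such that for every b ∈ M_B the set of neighbors of b in M_R equals R1 or R2. If additionally ω_B > 1, there exist partitions M_R = R1 ∪ R2 and M_B = B1 ∪ B2 into non-empty parts such that the set of cross edges in G[M_R ∪ M_B] is exactly (R1 × B1) ∪ (R2 × B2). -/

import Mathlib

open SimpleGraph

/-- A partial colored isomorphism of the 2-colored graph `(G, red)`, defined on the set `S`:
an injective map preserving colors and adjacency on `S`. -/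
def IsPartialIso {V : Type} (G : SimpleGraph V) (red : V → Prop) (S : Set V) (f : V → V) :
    Prop :=
  Set.InjOn f S ∧ (∀ v ∈ S, (red (f v) ↔ red v)) ∧
    ∀ u ∈ S, ∀ v ∈ S, (G.Adj (f u) (f v) ↔ G.Adj u v)

/-- A 2-colored graph is ultrahomogeneous if every isomorphism between two finite induced
colored subgraphs extends to a color-preserving automorphism. -/
def Ultrahomogeneous {V : Type} (G : SimpleGraph V) (red : V → Prop) : Prop :=
  ∀ S : Set V, S.Finite → ∀ f : V → V, IsPartialIso G red S f →
    ∃ ψ : G ≃g G, (∀ v, red (ψ v) ↔ red v) ∧ ∀ v ∈ S, ψ v = f v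

/-- The set `P` induces a disjoint union of cliques in `G` (no induced monochromatic `P₃`). -/
def IsUnionOfCliques {V : Type} (G : SimpleGraph V) (P : Set V) : Prop :=
  ∀ u ∈ P, ∀ v ∈ P, ∀ w ∈ P, G.Adj u v → G.Adj v w → u ≠ w → G.Adj u w

/-- `M` is an inclusion-wise maximal clique of the subgraph of `G` induced on `P`. -/
def IsMaxCliqueIn {V : Type} (G : SimpleGraph V) (P : Set V) (M : Set V) : Prop :=
  M ⊆ P ∧ G.IsClique M ∧ ∀ M' : Set V, M' ⊆ P → G.IsClique M' → M ⊆ M' → M = M'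

/-- `S` is an independent set in `G`. -/
def IsIndepIn {V : Type} (G : SimpleGraph V) (S : Set V) : Prop :=
  ∀ u ∈ S, ∀ v ∈ S, ¬ G.Adj u v

/-- The 2-colored graph `(H, redH)` is realized in `(G, red)`, i.e. isomorphic to an
induced colored subgraph of `G`. -/
def Realizes {V : Type} (G : SimpleGraph V) (red : V → Prop) {W : Type} (H : SimpleGraph W)
    (redH : W → Prop) : Prop :=
  ∃ f : W → V, Function.Injective f ∧ (∀ w, red (f w) ↔ redH w) ∧
    ∀ u w : W, G.Adj (f u) (f w) ↔ H.Adj u w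

/-- `(H, redH)` is minimally omitted in `(G, red)`: it is omitted, but every proper induced
subgraph of it is realized. -/
def MinOmitted {V : Type} (G : SimpleGraph V) (red : V → Prop) {W : Type} (H : SimpleGraph W)
    (redH : W → Prop) : Prop :=
  ¬ Realizes G red H redH ∧
    ∀ S : Set W, S ≠ Set.univ → Realizes G red (H.induce S) (fun x => redH x.1)

/-- Isomorphism of 2-colored graphs. -/
def ColoredIso {V : Type} (G : SimpleGraph V) (red : V → Prop) {W : Type} (H : SimpleGraph W)
    (redH : W → Prop) : Prop :=
  ∃ e : G ≃g H, ∀ v, red v ↔ redH (e v)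

/-- The graph obtained from `G` by complementing the cross edges while keeping the
edges inside each color class. -/
def crossComp {V : Type} (G : SimpleGraph V) (red : V → Prop) : SimpleGraph V :=
  SimpleGraph.fromRel (fun u v =>
    ((red u ↔ red v) ∧ G.Adj u v) ∨ (¬ (red u ↔ red v) ∧ ¬ G.Adj u v))

/-- The blow-up of the 2-colored graph `(H, redH)` (whose red class should be independent),
replacing every red vertex by a copy of `I` forming a clique, joined to the neighbors of the
original vertex. -/
def blowUp {V : Type} (H : SimpleGraph V) (redH : V → Prop) (I : Type) :
    SimpleGraph ({v : V // redH v} × I ⊕ {v : V // ¬ redH v}) :=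
  SimpleGraph.fromRel (fun x y =>
    match x, y with
    | Sum.inl (u, i), Sum.inl (u', i') => H.Adj u.1 u'.1 ∨ (u = u' ∧ i ≠ i')
    | Sum.inl (u, _), Sum.inr b => H.Adj u.1 b.1
    | Sum.inr b, Sum.inl (u, _) => H.Adj b.1 u.1
    | Sum.inr b, Sum.inr b' => H.Adj b.1 b'.1)

/-- The coloring of the blow-up: all vertices replacing red vertices are red. -/
def blowUpRed (V : Type) (redH : V → Prop) (I : Type) :
    ({v : V // redH v} × I ⊕ {v : V // ¬ redH v}) → Prop :=
  Sum.elim (fun _ => True) (fun _ => False)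

/-- `(G, red)` is a blow-up with the red class blown up: it is isomorphic (as a colored graph)
to the blow-up of some `(H, redH)` with independent red class by an `i`-clique, `2 ≤ i ≤ ℵ₀`. -/
def IsBlowUpOf {V : Type} (G : SimpleGraph V) (red : V → Prop) : Prop :=
  ∃ (U : Type) (H : SimpleGraph U) (redH : U → Prop) (I : Type),
    (∀ u v : U, redH u → redH v → ¬ H.Adj u v) ∧
    2 ≤ Cardinal.mk I ∧ Cardinal.mk I ≤ Cardinal.aleph0 ∧
    ∃ e : G ≃g blowUp H redH I, ∀ v, red v ↔ blowUpRed U redH I (e v)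

/-- `(G, red)` is a blow-up (of one of its two color classes). -/
def IsBlowUp {V : Type} (G : SimpleGraph V) (red : V → Prop) : Prop :=
  IsBlowUpOf G red ∨ IsBlowUpOf G (fun v => ¬ red v)

/-- A CUH graph: a countably infinite ultrahomogeneous 2-colored graph in which both
color classes induce disjoint unions of cliques. -/
def IsCUH {V : Type} (G : SimpleGraph V) (red : V → Prop) : Prop :=
  Countable V ∧ Infinite V ∧ Ultrahomogeneous G red ∧
    IsUnionOfCliques G {v | red v} ∧ IsUnionOfCliques G {v | ¬ red v}

/-- A basic CUH graph: a CUH graph which is not a blow-up and where both independence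
numbers are at least 2. -/
def IsBasicCUH {V : Type} (G : SimpleGraph V) (red : V → Prop) : Prop :=
  IsCUH G red ∧ ¬ IsBlowUp G red ∧
    (∃ u v, red u ∧ red v ∧ u ≠ v ∧ ¬ G.Adj u v) ∧
    (∃ u v, ¬ red u ∧ ¬ red v ∧ u ≠ v ∧ ¬ G.Adj u v)

/-- The graph `D`: red vertices `0, 1`, blue vertices `2, 3`, edges
`{01, 23, 02, 03, 12}` (a 2-colored diamond). -/
def Dgraph : SimpleGraph (Fin 4) :=
  SimpleGraph.fromRel (fun x y =>
    (x = 0 ∧ y = 1) ∨ (x = 2 ∧ y = 3) ∨ (x = 0 ∧ y = 2) ∨ (x = 0 ∧ y = 3) ∨ (x = 1 ∧ y = 2))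

/-- The coloring of `D` and `D̃`: `0, 1` are red, `2, 3` are blue. -/
def Dred : Fin 4 → Prop := fun x => x = 0 ∨ x = 1

/-- The graph `D̃`, the cross-edge complement of `D`: the path `0 – 1 – 3 – 2`. -/
def Dtilde : SimpleGraph (Fin 4) :=
  SimpleGraph.fromRel (fun x y => (x = 0 ∧ y = 1) ∨ (x = 1 ∧ y = 3) ∨ (x = 3 ∧ y = 2))

/-- `T_r`: the triangle with two red vertices and one blue vertex. -/
def Tr : SimpleGraph (Fin 3) := ⊤

/-- The coloring of `T_r` and `T̃_r`: `0, 1` red, `2` blue. -/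
def TrRed : Fin 3 → Prop := fun x => x = 0 ∨ x = 1

/-- `T̃_r`: a red edge together with an isolated blue vertex. -/
def TrTilde : SimpleGraph (Fin 3) := SimpleGraph.fromRel (fun x y => x = 0 ∧ y = 1)

/-- `T_b`: the triangle with one red vertex and two blue vertices. -/
def Tb : SimpleGraph (Fin 3) := ⊤

/-- The coloring of `T_b` and `T̃_b`: `0` red, `1, 2` blue. -/
def TbRed : Fin 3 → Prop := fun x => x = 0

/-- `T̃_b`: a blue edge together with an isolated red vertex. -/
def TbTilde : SimpleGraph (Fin 3) := SimpleGraph.fromRel (fun x y => x = 1 ∧ y = 2)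

/-- An isomorphism between induced subgraphs on at most three vertices extends. -/
lemma Ultrahomogeneous.exists_extend_three {V : Type} {G : SimpleGraph V} {red : V → Prop}
    (h : Ultrahomogeneous G red) {x y z x' y' z' : V}
    (hxy : x = y ↔ x' = y') (hyz : y = z ↔ y' = z') (hxz : x = z ↔ x' = z')
    (hx : red x' ↔ red x) (hy : red y' ↔ red y) (hz : red z' ↔ red z)
    (axy : G.Adj x' y' ↔ G.Adj x y) (ayz : G.Adj y' z' ↔ G.Adj y z)
    (axz : G.Adj x' z' ↔ G.Adj x z) :
    ∃ ψ : G ≃g G, (∀ v, red (ψ v) ↔ red v) ∧ ψ x = x' ∧ ψ y = y' ∧ ψ z = z' := by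
  classical
  let f : V → V := fun v => if v = x then x' else if v = y then y' else z'
  have fx : f x = x' := by simp [f]
  have fy : f y = y' := by simp only [f]; grind
  have fz : f z = z' := by simp only [f]; grind
  have hf : IsPartialIso G red {x, y, z} f := by
    refine ⟨?_, ?_, ?_⟩
    · rintro u (rfl | rfl | rfl) v (rfl | rfl | rfl) huv <;> grind
    · rintro u (rfl | rfl | rfl) <;> simpa [fx, fy, fz]
    · rintro u (rfl | rfl | rfl) v (rfl | rfl | rfl) <;>
        simp only [fx, fy, fz, SimpleGraph.irrefl] <;>
        first | assumption | (rw [G.adj_comm, axy, G.adj_comm]) |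
          (rw [G.adj_comm, ayz, G.adj_comm]) | (rw [G.adj_comm, axz, G.adj_comm])
  obtain ⟨ψ, hψ, hS⟩ := h _ (Set.toFinite _) f hf
  exact ⟨ψ, hψ, by rw [hS x (by simp), fx], by rw [hS y (by simp), fy],
    by rw [hS z (by simp), fz]⟩

/-- An isomorphism between induced subgraphs on at most two vertices extends. -/
lemma Ultrahomogeneous.exists_extend_two {V : Type} {G : SimpleGraph V} {red : V → Prop}
    (h : Ultrahomogeneous G red) {x y x' y' : V} (hxy : x = y ↔ x' = y')
    (hx : red x' ↔ red x) (hy : red y' ↔ red y) (axy : G.Adj x' y' ↔ G.Adj x y) :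
    ∃ ψ : G ≃g G, (∀ v, red (ψ v) ↔ red v) ∧ ψ x = x' ∧ ψ y = y' := by
  obtain ⟨ψ, hψ, h1, h2, -⟩ := h.exists_extend_three (z := y) (z' := y') hxy (by simp) hxy
    hx hy hy axy (by simp) axy
  exact ⟨ψ, hψ, h1, h2⟩

/-- Ultrahomogeneity is invariant under swapping the two colors. -/
lemma Ultrahomogeneous.swap {V : Type} {G : SimpleGraph V} {red : V → Prop}
    (h : Ultrahomogeneous G red) : Ultrahomogeneous G (fun v => ¬ red v) := by
  intro S hS f hf
  obtain ⟨ψ, hψ, hψS⟩ := h S hS f ⟨hf.1, fun v hv => not_iff_not.mp (hf.2.1 v hv), hf.2.2⟩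
  exact ⟨ψ, fun v => not_congr (hψ v), hψS⟩

/-- Two vertices are equivalent if they are equal or lie in a common red clique. -/
def redCliqueSetoid {V : Type} (G : SimpleGraph V) (red : V → Prop)
    (hU : IsUnionOfCliques G {v | red v}) : Setoid V where
  r u v := u = v ∨ (red u ∧ red v ∧ G.Adj u v)
  iseqv :=
    { refl := fun _ => Or.inl rfl
      symm := by
        rintro u v (rfl | ⟨hu, hv, h⟩)
        · exact Or.inl rfl
        · exact Or.inr ⟨hv, hu, h.symm⟩
      trans := by
        rintro u v w (rfl | ⟨hu, hv, h⟩) (rfl | ⟨hv', hw, h'⟩)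
        · exact Or.inl rfl
        · exact Or.inr ⟨hv', hw, h'⟩
        · exact Or.inr ⟨hu, hv, h⟩
        · by_cases huw : u = w
          · exact Or.inl huw
          · exact Or.inr ⟨hu, hw, hU u hu v hv w hw h h' huw⟩ }

/-- If no vertex of the other color distinguishes two adjacent red vertices, then the graph
is a blow-up. -/
lemma isBlowUpOf_of_adj_iff {V : Type} {G : SimpleGraph V} {red : V → Prop} [Countable V]
    (hH : Ultrahomogeneous G red) (hU : IsUnionOfCliques G {v | red v})
    {r₀ r₁ : V} (hr₀ : red r₀) (hr₁ : red r₁) (hr : G.Adj r₀ r₁)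
    (hinv : ∀ u v b, red u → red v → ¬ red b → G.Adj u v → G.Adj u b → G.Adj v b) :
    IsBlowUpOf G red := by
  classical
  let s := redCliqueSetoid G red hU
  have hs : ∀ u v, s u v ↔ u = v ∨ (red u ∧ red v ∧ G.Adj u v) := fun _ _ => Iff.rfl
  let out : V → V := fun v => (Quotient.mk s v).out
  have hout : ∀ v, s (out v) v := fun v => Quotient.mk_out (s := s) v
  have hredout : ∀ v, red (out v) ↔ red v := by
    intro v
    rcases (hs _ _).1 (hout v) with h | ⟨h1, h2, -⟩
    · rw [h]
    · simp [h1, h2]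
  have hblueout : ∀ v, ¬ red v → out v = v := by
    intro v hv
    rcases (hs _ _).1 (hout v) with h | ⟨-, h2, -⟩
    · exact h
    · exact absurd h2 hv
  have hcross : ∀ u b, red u → ¬ red b → (G.Adj (out u) (out b) ↔ G.Adj u b) := by
    intro u b hu hb
    rw [hblueout b hb]
    rcases (hs _ _).1 (hout u) with h | ⟨h1, h2, h3⟩
    · rw [h]
    · exact ⟨hinv _ _ _ h1 h2 hb h3, hinv _ _ _ h2 h1 hb h3.symm⟩
  have hmk : ∀ u v : V, Quotient.mk s u = Quotient.mk s v ↔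
      u = v ∨ (red u ∧ red v ∧ G.Adj u v) := fun u v => Quotient.eq (r := s)
  have htrans : ∀ q : Quotient s, ∃ ψ : G ≃g G, (∀ v, red (ψ v) ↔ red v) ∧
      (red q.out → ψ q.out = r₀) := by
    intro q
    by_cases hq : red q.out
    · obtain ⟨ψ, h1, h2, -⟩ := hH.exists_extend_two (x := q.out) (y := q.out) (x' := r₀)
        (y' := r₀) (by simp) (by simp [hq, hr₀]) (by simp [hq, hr₀]) (by simp)
      exact ⟨ψ, h1, fun _ => h2⟩
    · exact ⟨SimpleGraph.Iso.refl, fun _ => Iff.rfl, fun h => absurd h hq⟩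
  choose ψ hψ hψ₀ using htrans
  let H : SimpleGraph (Quotient s) :=
    { Adj := fun q q' => q ≠ q' ∧ G.Adj q.out q'.out
      symm := ⟨fun q q' h => ⟨h.1.symm, h.2.symm⟩⟩
      loopless := ⟨fun q h => h.1 rfl⟩ }
  let redH : Quotient s → Prop := fun q => red q.out
  have hHadj : ∀ u v, H.Adj (Quotient.mk s u) (Quotient.mk s v) ↔
      Quotient.mk s u ≠ Quotient.mk s v ∧ G.Adj (out u) (out v) := fun _ _ => Iff.rfl
  let I : Type := {v : V // s v r₀}
  have hψI : ∀ v, red v → s (ψ (Quotient.mk s v) v) r₀ := by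
    intro v hv
    have h0 : ψ (Quotient.mk s v) (out v) = r₀ := hψ₀ _ ((hredout v).2 hv)
    rcases (hs _ _).1 (hout v) with h | ⟨h1, h2, h3⟩
    · rw [h] at h0
      exact Or.inl h0
    · refine Or.inr ⟨(hψ _ _).2 hv, hr₀, ?_⟩
      rw [← h0]
      exact (ψ _).map_adj_iff.2 h3.symm
  let f : V → {q // redH q} × I ⊕ {q // ¬ redH q} := fun v =>
    if h : red v then Sum.inl (⟨Quotient.mk s v, (hredout v).2 h⟩, ⟨_, hψI v h⟩)
    else Sum.inr ⟨Quotient.mk s v, fun h' => h ((hredout v).1 h')⟩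
  have hfr : ∀ v (h : red v), f v =
      Sum.inl (⟨Quotient.mk s v, (hredout v).2 h⟩, ⟨_, hψI v h⟩) := fun v h => dif_pos h
  have hfb : ∀ v (h : ¬ red v), f v =
      Sum.inr ⟨Quotient.mk s v, fun h' => h ((hredout v).1 h')⟩ := fun v h => dif_neg h
  have hinj : Function.Injective f := by
    intro u v huv
    by_cases hu : red u <;> by_cases hv : red v
    · rw [hfr u hu, hfr v hv] at huv
      simp only [Sum.inl.injEq, Prod.mk.injEq, Subtype.mk.injEq] at huv
      obtain ⟨h1, h2⟩ := huv
      have h2 : ψ (Quotient.mk s u) u = ψ (Quotient.mk s v) v := congrArg Subtype.val h2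
      rw [h1] at h2
      exact (ψ _).injective h2
    · rw [hfr u hu, hfb v hv] at huv
      cases huv
    · rw [hfb u hu, hfr v hv] at huv
      cases huv
    · rw [hfb u hu, hfb v hv] at huv
      simp only [Sum.inr.injEq, Subtype.mk.injEq] at huv
      rcases (hmk _ _).1 huv with h | h
      · exact h
      · exact absurd h.1 hu
  have hsurj : Function.Surjective f := by
    rintro (⟨⟨q, hq⟩, ⟨w, hw⟩⟩ | ⟨q, hq⟩)
    · have hwred : red w := by
        rcases (hs _ _).1 hw with h | h
        · rwa [h]
        · exact h.1
      have hred : red ((ψ q).symm w) := by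
        rw [← hψ q]
        simpa using hwred
      have hmem : Quotient.mk s ((ψ q).symm w) = q := by
        rw [← Quotient.out_eq q, hmk, Quotient.out_eq]
        rcases (hs _ _).1 hw with h | ⟨-, -, h⟩
        · left
          rw [h, ← hψ₀ q hq]
          simp
        · right
          refine ⟨hred, hq, ?_⟩
          rw [← (ψ q).map_adj_iff]
          simpa [hψ₀ q hq] using h
      refine ⟨(ψ q).symm w, ?_⟩
      rw [hfr _ hred]
      simp [hmem]
    · refine ⟨q.out, ?_⟩
      rw [hfb _ hq]
      simp
  have hadj : ∀ u v, (blowUp H redH I).Adj (f u) (f v) ↔ G.Adj u v := by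
    intro u v
    by_cases huv : u = v
    · simp [huv]
    have hne : f u ≠ f v := fun h => huv (hinj h)
    simp only [blowUp, SimpleGraph.fromRel_adj]
    by_cases hu : red u <;> by_cases hv : red v
    · have key : ∀ x y, red x → red y → x ≠ y → (G.Adj x y ↔
          Quotient.mk s x = Quotient.mk s y) := by
        intro x y hx hy hxy
        simp [hmk, hx, hy, hxy]
      have hnadj : ∀ x y, red x → red y →
          ¬ H.Adj (Quotient.mk s x) (Quotient.mk s y) := by
        rintro x y hx hy ⟨h1, h2⟩
        refine h1 ?_
        rw [← Quotient.out_eq (Quotient.mk s x), ← Quotient.out_eq (Quotient.mk s y), hmk]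
        exact Or.inr ⟨(hredout x).2 hx, (hredout y).2 hy, h2⟩
      rw [hfr u hu, hfr v hv] at hne ⊢
      simp only [hnadj u v hu hv, hnadj v u hv hu, false_or, key u v hu hv huv]
      simp only [ne_eq, Sum.inl.injEq, Prod.mk.injEq, Subtype.mk.injEq] at hne ⊢
      grind
    · rw [hfr u hu, hfb v hv]
      have : Quotient.mk s u ≠ Quotient.mk s v := fun h => by
        rcases (hmk _ _).1 h with h | h
        · exact huv h
        · exact hv h.2.1
      simp [hHadj, this, this.symm, hcross u v hu hv, (G.adj_comm (out v) (out u))]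
    · rw [hfb u hu, hfr v hv]
      have : Quotient.mk s u ≠ Quotient.mk s v := fun h => by
        rcases (hmk _ _).1 h with h | h
        · exact huv h
        · exact hu h.1
      simp [hHadj, this, this.symm, hcross v u hv hu, (G.adj_comm (out u) (out v)),
        G.adj_comm u v]
    · rw [hfb u hu, hfb v hv]
      have : Quotient.mk s u ≠ Quotient.mk s v := fun h => by
        rcases (hmk _ _).1 h with h | h
        · exact huv h
        · exact hu h.1
      simp [hHadj, this, this.symm, hblueout u hu, hblueout v hv, G.adj_comm v u]
  refine ⟨Quotient s, H, redH, I, ?_, ?_, Cardinal.mk_le_aleph0,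
    ⟨Equiv.ofBijective f ⟨hinj, hsurj⟩, fun {u v} => hadj u v⟩, ?_⟩
  · rintro q q' hq hq' ⟨h1, h2⟩
    refine h1 ?_
    rw [← Quotient.out_eq q, ← Quotient.out_eq q', hmk]
    exact Or.inr ⟨hq, hq', h2⟩
  · rw [Cardinal.two_le_iff]
    refine ⟨⟨r₀, Or.inl rfl⟩, ⟨r₁, Or.inr ⟨hr₁, hr₀, hr.symm⟩⟩, ?_⟩
    exact fun h => hr.ne (congrArg Subtype.val h)
  · intro v
    change red v ↔ blowUpRed _ redH I (f v)
    by_cases hv : red v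
    · rw [hfr v hv]
      simp [blowUpRed, hv]
    · rw [hfb v hv]
      simp [blowUpRed, hv]

/-- If the graph is not a red blow-up, every blue vertex has both a neighbor and a non-neighbor
in every nontrivial red clique. -/
lemma exists_adj_and_not_adj {V : Type} {G : SimpleGraph V} {red : V → Prop} [Countable V]
    (hH : Ultrahomogeneous G red) (hU : IsUnionOfCliques G {v | red v})
    (hB : ¬ IsBlowUpOf G red) {r₀ r₁ : V} (hr₀ : red r₀) (hr₁ : red r₁) (hr : G.Adj r₀ r₁)
    {u b : V} (hu : red u) (hb : ¬ red b) :
    (∃ v, red v ∧ (v = u ∨ G.Adj u v) ∧ G.Adj v b) ∧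
      ∃ v, red v ∧ (v = u ∨ G.Adj u v) ∧ ¬ G.Adj v b := by
  obtain ⟨x, y, c, hx, hy, hc, hxy, hxc, hyc⟩ : ∃ x y c, red x ∧ red y ∧ ¬ red c ∧
      G.Adj x y ∧ G.Adj x c ∧ ¬ G.Adj y c := by
    by_contra! hcon
    exact hB (isBlowUpOf_of_adj_iff hH hU hr₀ hr₁ hr hcon)
  have move : ∀ x y, red x → red y → G.Adj x y → (G.Adj u b ↔ G.Adj x c) →
      ∃ v, red v ∧ G.Adj u v ∧ (G.Adj v b ↔ G.Adj y c) := by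
    intro x y hx hy hxy hiff
    obtain ⟨ψ, h1, h2, h3⟩ := hH.exists_extend_two (x := x) (y := c) (x' := u) (y' := b)
      ⟨fun h => absurd (h ▸ hx) hc, fun h => absurd (h ▸ hu) hb⟩ (by simp [hx, hu])
      (by simp [hc, hb]) hiff
    refine ⟨ψ y, (h1 y).2 hy, ?_, ?_⟩
    · rw [← h2]
      exact ψ.map_adj_iff.2 hxy
    · rw [← h3]
      exact ψ.map_adj_iff
  by_cases hub : G.Adj u b
  · obtain ⟨v, hv, huv, hvb⟩ := move x y hx hy hxy (by simp [hub, hxc])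
    exact ⟨⟨u, hu, Or.inl rfl, hub⟩, ⟨v, hv, Or.inr huv, by simpa [hyc] using hvb⟩⟩
  · obtain ⟨v, hv, huv, hvb⟩ := move y x hy hx hxy.symm (by simp [hub, hyc])
    exact ⟨⟨v, hv, Or.inr huv, hvb.2 hxc⟩, ⟨u, hu, Or.inl rfl, hub⟩⟩

/-- If `D` is omitted, a red vertex adjacent to a common red neighbor of two adjacent blue
vertices does not distinguish these. -/
lemma adj_iff_of_omits_D {V : Type} {G : SimpleGraph V} {red : V → Prop}
    (hD : ¬ Realizes G red Dgraph Dred) {r₁ r₂ b₁ b₂ : V} (hr₁ : red r₁) (hr₂ : red r₂)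
    (hb₁ : ¬ red b₁) (hb₂ : ¬ red b₂) (hr : G.Adj r₁ r₂) (hb : G.Adj b₁ b₂)
    (h₁₁ : G.Adj r₁ b₁) (h₁₂ : G.Adj r₁ b₂) : G.Adj r₂ b₁ ↔ G.Adj r₂ b₂ := by
  have key : ∀ c d, ¬ red c → ¬ red d → G.Adj c d → G.Adj r₁ c → G.Adj r₁ d →
      G.Adj r₂ c → G.Adj r₂ d := by
    intro c d hc hd hcd h1c h1d h2c
    by_contra h2d
    refine hD ⟨![r₁, r₂, c, d], ?_, ?_, ?_⟩
    · intro i j hij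
      fin_cases i <;> fin_cases j <;> simp at hij ⊢ <;> subst hij <;> simp_all
    · intro i
      fin_cases i <;> simp [Dred, *]
    · intro i j
      fin_cases i <;> fin_cases j <;> simp [Dgraph, *, G.adj_comm]
  exact ⟨key _ _ hb₁ hb₂ hb h₁₁ h₁₂, key _ _ hb₂ hb₁ hb.symm h₁₂ h₁₁⟩

/-- Membership in a maximal clique in terms of a given member. -/
lemma IsMaxCliqueIn.mem_iff {V : Type} {G : SimpleGraph V} {P M : Set V}
    (hM : IsMaxCliqueIn G P M) (hP : IsUnionOfCliques G P) {u : V} (hu : u ∈ M) {v : V} :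
    v ∈ M ↔ v ∈ P ∧ (v = u ∨ G.Adj u v) := by
  obtain ⟨hMP, hcl, hmax⟩ := hM
  constructor
  · intro hv
    refine ⟨hMP hv, ?_⟩
    by_cases h : v = u
    · exact Or.inl h
    · exact Or.inr (hcl hu hv (Ne.symm h))
  · rintro ⟨hvP, rfl | huv⟩
    · exact hu
    · have hcl' : G.IsClique (insert v M) := by
        rw [SimpleGraph.isClique_insert]
        refine ⟨hcl, fun w hw hvw => ?_⟩
        by_cases h : u = w
        · exact h ▸ huv.symm
        · exact hP v hvP u (hMP hu) w (hMP hw) huv.symm (hcl hu hw h) hvw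
      rw [hmax _ (Set.insert_subset hvP hMP) hcl' (Set.subset_insert v M)]
      exact Set.mem_insert v M

/-- A maximal clique in a nonempty set is nonempty. -/
lemma IsMaxCliqueIn.nonempty {V : Type} {G : SimpleGraph V} {P M : Set V}
    (hM : IsMaxCliqueIn G P M) (hP : P.Nonempty) : M.Nonempty := by
  obtain ⟨p, hp⟩ := hP
  by_contra h
  rw [Set.not_nonempty_iff_eq_empty] at h
  have := hM.2.2 {p} (by simpa using hp) (by simp) (by simp [h])
  rw [h] at this
  exact (Set.singleton_nonempty p).ne_empty this.symm

/-- A maximal clique of cardinality above one contains an edge. -/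
lemma IsMaxCliqueIn.exists_adj {V : Type} {G : SimpleGraph V} {P M : Set V}
    (hM : IsMaxCliqueIn G P M) (hcard : 1 < Cardinal.mk M) :
    ∃ u v, u ∈ P ∧ v ∈ P ∧ G.Adj u v := by
  rw [Cardinal.one_lt_iff_nontrivial] at hcard
  obtain ⟨u, v, huv⟩ := exists_pair_ne M
  exact ⟨u, v, hM.1 u.2, hM.1 v.2, hM.2.1 u.2 v.2 (Subtype.coe_injective.ne huv)⟩

/-- Adjacent blue vertices have equal or complementary neighborhoods in every red clique:
if `r` distinguishes `b₁` and `b₂`, so does every red neighbor of `r`. -/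
lemma IsBasicCUH.adj_iff_not_adj {V : Type} {G : SimpleGraph V} {red : V → Prop}
    (hG : IsBasicCUH G red) (hD : ¬ Realizes G red Dgraph Dred)
    {r b₁ b₂ a : V} (hr : red r) (ha : red a) (hb₁ : ¬ red b₁) (hb₂ : ¬ red b₂)
    (hra : G.Adj r a) (hb : G.Adj b₁ b₂) (h₁ : G.Adj r b₁) (h₂ : ¬ G.Adj r b₂) :
    G.Adj a b₁ ↔ ¬ G.Adj a b₂ := by
  obtain ⟨⟨hcount, -, hH, hUR, hUB⟩, hBU, ⟨p, p', hp, hp', hpne, hpp⟩, -⟩ := hG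
  have mixR : ∀ {u b : V}, red u → ¬ red b →
      (∃ v, red v ∧ (v = u ∨ G.Adj u v) ∧ G.Adj v b) ∧
        ∃ v, red v ∧ (v = u ∨ G.Adj u v) ∧ ¬ G.Adj v b := fun hu hb =>
    exists_adj_and_not_adj hH hUR (fun h => hBU (Or.inl h)) hr ha hra hu hb
  have mixB : ∀ {b u : V}, ¬ red b → red u →
      ∃ v, ¬ red v ∧ (v = b ∨ G.Adj b v) ∧ G.Adj v u := fun hc hu =>
    (exists_adj_and_not_adj hH.swap hUB (fun h => hBU (Or.inr h)) hb₁ hb₂ hb hc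
      (not_not.2 hu)).1
  have redne : ∀ {x y : V}, red x → ¬ red y → x ≠ y := fun hx hy h => hy (h ▸ hx)
  -- two adjacent blue vertices with a common neighbor in the clique cannot be separated there
  have sep : ∀ {x y : V}, red x → red y → G.Adj x y → G.Adj x b₁ → G.Adj x b₂ →
      (G.Adj y b₁ ↔ G.Adj y b₂) := fun hx hy hxy h1 h2 =>
    adj_iff_of_omits_D hD hx hy hb₁ hb₂ hxy hb h1 h2
  by_cases ha₁ : G.Adj a b₁ <;> by_cases ha₂ : G.Adj a b₂ <;> simp only [ha₁, ha₂, not_true,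
    not_false_eq_true, iff_true, iff_false]
  · exact h₂ ((sep ha hr hra.symm ha₁ ha₂).1 h₁)
  exfalso
  have nocommon : ∀ v, red v → G.Adj a v → ¬ (G.Adj v b₁ ∧ G.Adj v b₂) := by
    rintro v hv hav ⟨hv1, hv2⟩
    have hvr : v ≠ r := fun h => h₂ (h ▸ hv2)
    exact h₂ ((sep hv hr (hUR v hv a ha r hr hav.symm hra.symm hvr) hv1 hv2).1 h₁)
  -- no red vertex is adjacent to two adjacent blue vertices
  have uniq : ∀ {v c d : V}, red v → ¬ red c → ¬ red d → G.Adj c d →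
      G.Adj v c → ¬ G.Adj v d := by
    intro v c d hv hc hd hcd hvc hvd
    obtain ⟨w, hw, rfl | hvw, hwc⟩ := (mixR hv hc).2
    · exact hwc hvc
    have hwd : ¬ G.Adj w d := fun h => hwc
      ((adj_iff_of_omits_D hD hv hw hc hd hvw hcd hvc hvd).2 h)
    obtain ⟨ψ, e1, e2, e3, e4⟩ := hH.exists_extend_three (x := w) (y := c) (z := d) (x' := a)
      (y' := b₁) (z' := b₂) (by simp [redne hw hc, redne ha hb₁]) (by simp [hcd.ne, hb.ne])
      (by simp [redne hw hd, redne ha hb₂]) (by simp [*]) (by simp [*]) (by simp [*])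
      (by simp [*]) (by simp [*]) (by simp [*])
    refine nocommon (ψ v) ((e1 v).2 hv) ?_ ⟨?_, ?_⟩
    · rw [← e2]
      exact ψ.map_adj_iff.2 hvw.symm
    · rw [← e3]
      exact ψ.map_adj_iff.2 hvc
    · rw [← e4]
      exact ψ.map_adj_iff.2 hvd
  obtain ⟨b₃, hb₃, hb₁₃, h₃a⟩ := mixB hb₁ ha
  have hb₁₃ : G.Adj b₁ b₃ := by
    rcases hb₁₃ with rfl | h
    · exact absurd h₃a.symm ha₁
    · exact h
  have hb₂₃ : G.Adj b₂ b₃ := by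
    refine hUB b₂ hb₂ b₁ hb₁ b₃ hb₃ hb.symm hb₁₃ ?_
    rintro rfl
    exact ha₂ h₃a.symm
  -- a red vertex outside the clique of `r`
  obtain ⟨q, hq, hqr, hqadj⟩ : ∃ q, red q ∧ q ≠ r ∧ ¬ G.Adj q r := by
    by_cases h : p ≠ r ∧ ¬ G.Adj p r
    · exact ⟨p, hp, h⟩
    by_cases h' : p' ≠ r ∧ ¬ G.Adj p' r
    · exact ⟨p', hp', h'⟩
    exfalso
    by_cases e : p = r
    · subst e
      exact h' ⟨hpne.symm, fun h => hpp h.symm⟩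
    by_cases e' : p' = r
    · subst e'
      exact h ⟨e, hpp⟩
    have k : G.Adj p r := by tauto
    have k' : G.Adj p' r := by tauto
    exact hpp (hUR p hp r hr p' hp' k k'.symm hpne)
  have far : ∀ {v : V}, red v → (v = q ∨ G.Adj q v) → v ≠ r ∧ ¬ G.Adj r v := by
    rintro v hv (rfl | h)
    · exact ⟨hqr, fun h => hqadj h.symm⟩
    · refine ⟨fun e => hqadj (e ▸ h), fun e => hqadj (hUR q hq v hv r hr h e.symm hqr)⟩
  obtain ⟨⟨s, hs, hqs, hs₁⟩, -⟩ := mixR hq hb₁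
  obtain ⟨⟨t, ht, hqt, ht₂⟩, -⟩ := mixR hq hb₂
  obtain ⟨hsr, hrs⟩ := far hs hqs
  obtain ⟨htr, hrt⟩ := far ht hqt
  have hr₃ := uniq hr hb₁ hb₃ hb₁₃ h₁
  have hs₃ := uniq hs hb₁ hb₃ hb₁₃ hs₁
  have ht₃ := uniq ht hb₂ hb₃ hb₂₃ ht₂
  have ht₁ := uniq ht hb₂ hb₁ hb.symm ht₂
  obtain ⟨ψ, e1, e2, e3, e4⟩ := hH.exists_extend_three (x := r) (y := s) (z := b₃) (x' := r)
    (y' := t) (z' := b₃) (by simp [hsr.symm, htr.symm])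
    (by simp [redne hs hb₃, redne ht hb₃]) (by simp) (by simp) (by simp [*]) (by simp)
    (by simp [*]) (by simp [*]) (by simp)
  have k1 : G.Adj r (ψ b₁) := by
    rw [← e2]
    exact ψ.map_adj_iff.2 h₁
  have k2 : G.Adj t (ψ b₁) := by
    rw [← e3]
    exact ψ.map_adj_iff.2 hs₁
  have k3 : G.Adj (ψ b₁) b₃ := by
    rw [← e4]
    exact ψ.map_adj_iff.2 hb₁₃
  have hne : ψ b₁ ≠ b₁ := fun h => ht₁ (h ▸ k2)
  have hblue : ¬ red (ψ b₁) := fun h => hb₁ ((e1 b₁).1 h)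
  exact uniq hr hb₁ hblue (hUB _ hb₁ _ hb₃ _ hblue hb₁₃ k3.symm hne.symm) h₁ k1

/-- partitions induced by neighborhoods in a basic CUH graph omitting `D`
with a non-independent color class. -/
theorem stmt_11 {V : Type} (G : SimpleGraph V) (red : V → Prop)
    (hG : IsBasicCUH G red)
    (hOmD : ¬ Realizes G red Dgraph Dred)
    (hni : (∃ u v, red u ∧ red v ∧ G.Adj u v) ∨ (∃ u v, ¬ red u ∧ ¬ red v ∧ G.Adj u v))
    (MR MB : Set V) (hMR : IsMaxCliqueIn G {v | red v} MR)
    (hMB : IsMaxCliqueIn G {v | ¬ red v} MB) :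
    ((∀ M : Set V, IsMaxCliqueIn G {v | red v} M → 1 < Cardinal.mk M) →
      ∃ R1 R2 : Set V, R1.Nonempty ∧ R2.Nonempty ∧ R1 ∪ R2 = MR ∧ Disjoint R1 R2 ∧
        ∀ b ∈ MB, {u | u ∈ MR ∧ G.Adj b u} = R1 ∨ {u | u ∈ MR ∧ G.Adj b u} = R2) ∧
    ((∀ M : Set V, IsMaxCliqueIn G {v | red v} M → 1 < Cardinal.mk M) →
     (∀ M : Set V, IsMaxCliqueIn G {v | ¬ red v} M → 1 < Cardinal.mk M) →
      ∃ R1 R2 B1 B2 : Set V, R1.Nonempty ∧ R2.Nonempty ∧ B1.Nonempty ∧ B2.Nonempty ∧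
        R1 ∪ R2 = MR ∧ Disjoint R1 R2 ∧ B1 ∪ B2 = MB ∧ Disjoint B1 B2 ∧
        ∀ r ∈ MR, ∀ b ∈ MB,
          (G.Adj r b ↔ ((r ∈ R1 ∧ b ∈ B1) ∨ (r ∈ R2 ∧ b ∈ B2)))) := by
  have hG' := hG
  obtain ⟨⟨hcount, -, hH, hUR, hUB⟩, hBU, ⟨p, -, hp, -⟩, ⟨c, -, hc, -⟩⟩ := hG'
  obtain ⟨b₀, hb₀⟩ := hMB.nonempty ⟨c, hc⟩
  obtain ⟨r₀, hr₀⟩ := hMR.nonempty ⟨p, hp⟩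
  have hmain : (∀ M : Set V, IsMaxCliqueIn G {v | red v} M → 1 < Cardinal.mk M) →
      {u | u ∈ MR ∧ G.Adj b₀ u}.Nonempty ∧ {u | u ∈ MR ∧ ¬ G.Adj b₀ u}.Nonempty ∧
      ∀ b ∈ MB, (∀ u ∈ MR, G.Adj b u ↔ G.Adj b₀ u) ∨ ∀ u ∈ MR, G.Adj b u ↔ ¬ G.Adj b₀ u := by
    intro hω
    obtain ⟨x, y, hx, hy, hxy⟩ := hMR.exists_adj (hω MR hMR)
    obtain ⟨⟨v, hv, hrv, hvb⟩, ⟨w, hw, hrw, hwb⟩⟩ := exists_adj_and_not_adj hH hUR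
      (fun h => hBU (Or.inl h)) hx hy hxy (hMR.1 hr₀) (hMB.1 hb₀)
    refine ⟨⟨v, (hMR.mem_iff hUR hr₀).2 ⟨hv, hrv⟩, hvb.symm⟩,
      ⟨w, (hMR.mem_iff hUR hr₀).2 ⟨hw, hrw⟩, fun h => hwb h.symm⟩, ?_⟩
    intro b hb
    by_cases hbb : b = b₀
    · exact Or.inl fun u _ => by rw [hbb]
    have hadj : G.Adj b b₀ := hMB.2.1 hb hb₀ hbb
    by_cases hall : ∀ u ∈ MR, G.Adj b u ↔ G.Adj b₀ u
    · exact Or.inl hall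
    right
    push Not at hall
    obtain ⟨z, hz, hzb⟩ := hall
    intro u hu
    by_cases huz : u = z
    · subst huz
      tauto
    have hzu : G.Adj z u := hMR.2.1 hz hu (Ne.symm huz)
    simp only [G.adj_comm b, G.adj_comm b₀] at hzb ⊢
    rcases hzb with ⟨h1, h2⟩ | ⟨h1, h2⟩
    · exact hG.adj_iff_not_adj hOmD (hMR.1 hz) (hMR.1 hu) (hMB.1 hb) (hMB.1 hb₀) hzu hadj h1 h2
    · have := hG.adj_iff_not_adj hOmD (hMR.1 hz) (hMR.1 hu) (hMB.1 hb₀) (hMB.1 hb) hzu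
        hadj.symm h2 h1
      tauto
  constructor
  · intro hω
    obtain ⟨hne₁, hne₂, hb⟩ := hmain hω
    refine ⟨_, _, hne₁, hne₂, ?_, ?_, fun b hbM => (hb b hbM).imp ?_ ?_⟩
    · ext u
      simp only [Set.mem_union, Set.mem_ofPred_eq]
      tauto
    · exact Set.disjoint_left.2 fun u h h' => h'.2 h.2
    · exact fun h => Set.ext fun u => and_congr_right (h u)
    · exact fun h => Set.ext fun u => and_congr_right (h u)
  · intro hωR hωB
    obtain ⟨hne₁, hne₂, hb⟩ := hmain hωR
    obtain ⟨r, hrM, hrb⟩ := hne₁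
    obtain ⟨x, y, hx, hy, hxy⟩ := hMB.exists_adj (hωB MB hMB)
    obtain ⟨d, hd, hbd, hdr⟩ := (exists_adj_and_not_adj hH.swap hUB (fun h => hBU (Or.inr h))
      hx hy hxy (hMB.1 hb₀) (not_not.2 (hMR.1 hrM))).2
    have hdM : d ∈ MB := (hMB.mem_iff hUB hb₀).2 ⟨hd, hbd⟩
    refine ⟨{u | u ∈ MR ∧ G.Adj b₀ u}, {u | u ∈ MR ∧ ¬ G.Adj b₀ u},
      {b | b ∈ MB ∧ G.Adj b r}, {b | b ∈ MB ∧ ¬ G.Adj b r}, ⟨r, hrM, hrb⟩, hne₂,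
      ⟨b₀, hb₀, hrb⟩, ⟨d, hdM, hdr⟩, ?_, ?_, ?_, ?_, ?_⟩
    · ext u
      simp only [Set.mem_union, Set.mem_ofPred_eq]
      tauto
    · exact Set.disjoint_left.2 fun u h h' => h'.2 h.2
    · ext u
      simp only [Set.mem_union, Set.mem_ofPred_eq]
      tauto
    · exact Set.disjoint_left.2 fun u h h' => h'.2 h.2
    · intro u hu b hbM
      simp only [Set.mem_ofPred_eq, hu, hbM, true_and, G.adj_comm u b]
      rcases hb b hbM with h | h
      · simp [h u hu, h r hrM, hrb]
      · simp [h u hu, h r hrM, hrb]
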